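/- Assume α > 1, both λ and β are nondecreasing on [t₀,∞), b(t) > β'(t) + β(t)/t (equivalently w(t) > 0) for every t ≥ t₀, and there exists ε ∈ (0, α−1) such that (α−3)·w(t) − t·w'(t) ≥ ε·b(t) for every t ≥ t₀. Then for every z ∈ argmin Φ, ∫_{t₀}^{∞} t·w(t)·⟨∇Φ_{λ(t)}(x(t)), x(t) − z⟩ dt < +∞. -/

import Mathlib

open Set MeasureTheory Filter Real

noncomputable section

/-- Convexity for extended-real-valued functions. -/
def EConvexOn {H : Type*} [NormedAddCommGroup H] [NormedSpace ℝ H] (f : H → EReal) : Prop :=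
  ∀ x y : H, ∀ a c : ℝ, 0 ≤ a → 0 ≤ c → a + c = 1 →
    f (a • x + c • y) ≤ (a : EReal) * f x + (c : EReal) * f y

/-- `p` is the proximal point of `f` with parameter `l` at `x`, i.e. the (unique) minimizer of
`y ↦ f y + ‖x - y‖² / (2l)`. -/
def IsProxPt {H : Type*} [NormedAddCommGroup H] [InnerProductSpace ℝ H]
    (f : H → EReal) (l : ℝ) (x p : H) : Prop :=
  ∀ y : H, f p + ((‖x - p‖ ^ 2 / (2 * l) : ℝ) : EReal)
      ≤ f y + ((‖x - y‖ ^ 2 / (2 * l) : ℝ) : EReal)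

/-- The Moreau envelope of `f` with parameter `l` (as a real number). -/
def moreau {H : Type*} [NormedAddCommGroup H] [InnerProductSpace ℝ H]
    (f : H → EReal) (l : ℝ) (x : H) : ℝ :=
  (⨅ y : H, f y + ((‖x - y‖ ^ 2 / (2 * l) : ℝ) : EReal)).toReal

/-!
The Moreau envelope `(l, x) ↦ Φ_l(x)` is jointly convex and jointly Fréchet differentiable, with
gradient `(-‖G‖² / 2, G)` where `G = (x - prox) / l`. Hence the gap `F(t) = Φ_{λ(t)}(x(t)) - Φ(z)`
satisfies `0 ≤ F ≤ ⟪G, x - z⟫` and `F' = ⟪G, ẋ⟫ - λ' ‖G‖² / 2`. The equation makes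
`r = (α - 1) (x - z) + t (ẋ + β G)` satisfy `r' = -t w G`, so the cross terms `⟪G, ẋ⟫` cancel in the
derivative of the energy `t² w F + ‖r‖² / 2`. What remains is at most `-ε t w ⟪G, x - z⟫`, and a
nonnegative energy can only dissipate a finite amount.
-/

section MoreauEnvelope

variable {H : Type*} [NormedAddCommGroup H] [InnerProductSpace ℝ H]
  {f : H → EReal} {l l₂ : ℝ} {x p y z : H}

/-- The gradient `(x - p) / l` of the Moreau envelope with parameter `l` at `x`, written in terms of
the proximal point `p` of `x`. -/
def moreauGrad (l : ℝ) (x p : H) : H := l⁻¹ • (x - p)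

theorem smul_moreauGrad (hl : l ≠ 0) : l • moreauGrad l x p = x - p :=
  smul_inv_smul₀ hl _

theorem norm_sq_sub_div_two_mul (hl : l ≠ 0) :
    ‖x - p‖ ^ 2 / (2 * l) = l / 2 * ‖moreauGrad l x p‖ ^ 2 := by
  rw [← smul_moreauGrad hl, norm_smul, mul_pow, Real.norm_eq_abs, sq_abs]
  field_simp

theorem neg_mul_norm_sq_le_inner_add (hl : 0 < l) (g u : H) :
    -(l / 2 * ‖g‖ ^ 2) ≤ inner ℝ g u + ‖u‖ ^ 2 / (2 * l) := by
  have hsq : ‖l • g + u‖ ^ 2 / (2 * l) = l / 2 * ‖g‖ ^ 2 + inner ℝ g u + ‖u‖ ^ 2 / (2 * l) := by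
    rw [norm_add_sq_real, real_inner_smul_left, norm_smul, Real.norm_eq_abs, mul_pow, sq_abs]
    field_simp
  have hnonneg : 0 ≤ ‖l • g + u‖ ^ 2 / (2 * l) := by positivity
  linarith

theorem isLittleO_norm_sq_div (hl : l ≠ 0) (x g : H) :
    (fun q : ℝ × H => ‖q.2 - x - (q.1 - l) • g‖ ^ 2 / (2 * q.1))
      =o[nhds (l, x)] fun q => q - (l, x) := by
  have hlin : (fun q : ℝ × H => q.2 - x - (q.1 - l) • g)
      =O[nhds (l, x)] fun q => q - (l, x) :=
    (ContinuousLinearMap.snd ℝ ℝ H - (ContinuousLinearMap.fst ℝ ℝ H).smulRight g).isBigO_sub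
      _ (l, x)
  have hsq : (fun q : ℝ × H => ‖q.2 - x - (q.1 - l) • g‖ ^ 2)
      =o[nhds (l, x)] fun q => q - (l, x) :=
    (hlin.norm_norm.pow 2).trans_isLittleO (Asymptotics.isLittleO_pow_sub_sub _ one_lt_two)
  have hinv : ContinuousAt (fun q : ℝ × H => (2 * q.1)⁻¹) (l, x) :=
    (continuous_const.mul continuous_fst).continuousAt.inv₀ (mul_ne_zero two_ne_zero hl)
  simpa only [div_eq_inv_mul, one_smul, smul_eq_mul] using
    (hinv.tendsto.isBigO_one ℝ).smul_isLittleO hsq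

theorem le_moreau {m : ℝ} (hm : ∀ u, (m : EReal) ≤ f u + ((‖x - u‖ ^ 2 / (2 * l) : ℝ) : EReal))
    (hy : f y ≠ ⊤) : m ≤ moreau f l x := by
  have hlt : ⨅ u, f u + ((‖x - u‖ ^ 2 / (2 * l) : ℝ) : EReal) < ⊤ :=
    (iInf_le _ y).trans_lt (EReal.add_lt_top hy (EReal.coe_ne_top _))
  simpa only [moreau, EReal.toReal_coe] using
    EReal.toReal_le_toReal (le_iInf hm) (EReal.coe_ne_bot m) hlt.ne

theorem moreau_le {m : ℝ} (hm : ∀ u, (m : EReal) ≤ f u + ((‖x - u‖ ^ 2 / (2 * l) : ℝ) : EReal))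
    (hy : f y ≠ ⊤) : moreau f l x ≤ (f y).toReal + ‖x - y‖ ^ 2 / (2 * l) := by
  have hbot : ⊥ < ⨅ u, f u + ((‖x - u‖ ^ 2 / (2 * l) : ℝ) : EReal) :=
    (EReal.bot_lt_coe m).trans_le (le_iInf hm)
  have hle : f y + ((‖x - y‖ ^ 2 / (2 * l) : ℝ) : EReal)
      ≤ (((f y).toReal + ‖x - y‖ ^ 2 / (2 * l) : ℝ) : EReal) := by
    rw [EReal.coe_add]
    gcongr
    exact EReal.le_coe_toReal hy
  simpa only [moreau, EReal.toReal_coe] using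
    EReal.toReal_le_toReal ((iInf_le _ y).trans hle) hbot.ne' (EReal.coe_ne_top _)

namespace IsProxPt

theorem ne_top (hp : IsProxPt f l x p) (hproper : ∃ y, f y ≠ ⊤) : f p ≠ ⊤ := by
  obtain ⟨y, hy⟩ := hproper
  intro h
  have hle := hp y
  rw [h, EReal.top_add_coe, top_le_iff] at hle
  exact (EReal.add_lt_top hy (EReal.coe_ne_top _)).ne hle

theorem moreau_eq (hp : IsProxPt f l x p) (hbot : f p ≠ ⊥) (htop : f p ≠ ⊤) :
    moreau f l x = (f p).toReal + ‖x - p‖ ^ 2 / (2 * l) := by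
  have hmin : ⨅ y, f y + ((‖x - y‖ ^ 2 / (2 * l) : ℝ) : EReal)
      = f p + ((‖x - p‖ ^ 2 / (2 * l) : ℝ) : EReal) :=
    le_antisymm (iInf_le _ p) (le_iInf hp)
  rw [moreau, hmin, EReal.toReal_add htop hbot (EReal.coe_ne_top _) (EReal.coe_ne_bot _),
    EReal.toReal_coe]

theorem toReal_le_moreau (hp : IsProxPt f l x p) (hl : 0 ≤ l) (hbot : ∀ u, f u ≠ ⊥)
    (hproper : ∃ y, f y ≠ ⊤) (hz : ∀ y, f z ≤ f y) : (f z).toReal ≤ moreau f l x := by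
  have htop := hp.ne_top hproper
  rw [hp.moreau_eq (hbot p) htop]
  exact (EReal.toReal_le_toReal (hz p) (hbot z) htop).trans
    (le_add_of_nonneg_right (by positivity))

theorem inner_moreauGrad_sub_mul_le (hp : IsProxPt f l x p) (hbot : ∀ u, f u ≠ ⊥)
    (hconv : EConvexOn f) (hl : l ≠ 0) (hy : f y ≠ ⊤) {θ : ℝ} (hθ₀ : 0 < θ) (hθ₁ : θ ≤ 1) :
    inner ℝ (moreauGrad l x p) (y - p) - θ * (‖y - p‖ ^ 2 / (2 * l))
      ≤ (f y).toReal - (f p).toReal := by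
  have hle := (hp ((1 - θ) • p + θ • y)).trans
    (add_le_add_left (hconv p y (1 - θ) θ (sub_nonneg.2 hθ₁) hθ₀.le (by ring)) _)
  rw [← EReal.coe_toReal hy (hbot y), ← EReal.coe_toReal (hp.ne_top ⟨y, hy⟩) (hbot p)] at hle
  norm_cast at hle
  have hx : x - ((1 - θ) • p + θ • y) = (x - p) - θ • (y - p) := by module
  have hexpand : ‖x - p - θ • (y - p)‖ ^ 2 / (2 * l) = ‖x - p‖ ^ 2 / (2 * l)
      - θ * (inner ℝ (moreauGrad l x p) (y - p) - θ * (‖y - p‖ ^ 2 / (2 * l))) := by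
    rw [norm_sub_sq_real, real_inner_smul_right, norm_smul, Real.norm_eq_abs, mul_pow, sq_abs,
      moreauGrad, real_inner_smul_left]
    field_simp
    ring
  rw [hx, hexpand] at hle
  exact le_of_mul_le_mul_left (by linarith) hθ₀

theorem inner_moreauGrad_le_sub (hp : IsProxPt f l x p) (hbot : ∀ u, f u ≠ ⊥)
    (hconv : EConvexOn f) (hl : l ≠ 0) (hy : f y ≠ ⊤) :
    inner ℝ (moreauGrad l x p) (y - p) ≤ (f y).toReal - (f p).toReal := by
  have hlim : Tendsto
      (fun θ : ℝ => inner ℝ (moreauGrad l x p) (y - p) - θ * (‖y - p‖ ^ 2 / (2 * l)))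
      (nhdsWithin 0 (Ioi 0)) (nhds (inner ℝ (moreauGrad l x p) (y - p))) :=
    tendsto_nhdsWithin_of_tendsto_nhds <|
      Continuous.tendsto' (by fun_prop) _ _ (by rw [zero_mul, sub_zero])
  refine le_of_tendsto hlim ?_
  filter_upwards [Ioc_mem_nhdsGT zero_lt_one] with θ ⟨hθ₀, hθ₁⟩
  exact hp.inner_moreauGrad_sub_mul_le hbot hconv hl hy hθ₀ hθ₁

theorem moreau_add_inner_add_le (hp : IsProxPt f l x p) (hbot : ∀ u, f u ≠ ⊥)
    (hconv : EConvexOn f) (hl : l ≠ 0) (hy : f y ≠ ⊤) :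
    moreau f l x + inner ℝ (moreauGrad l x p) (y - x) + l / 2 * ‖moreauGrad l x p‖ ^ 2
      ≤ (f y).toReal := by
  have hsub := hp.inner_moreauGrad_le_sub hbot hconv hl hy
  have hyp : y - p = (y - x) + l • moreauGrad l x p := by rw [smul_moreauGrad hl]; abel
  rw [hyp, inner_add_right, real_inner_smul_right, real_inner_self_eq_norm_sq] at hsub
  rw [hp.moreau_eq (hbot p) (hp.ne_top ⟨y, hy⟩), norm_sq_sub_div_two_mul hl]
  linarith

theorem moreau_sub_le_inner (hp : IsProxPt f l x p) (hbot : ∀ u, f u ≠ ⊥)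
    (hconv : EConvexOn f) (hl : 0 < l) (hz : f z ≠ ⊤) :
    moreau f l x - (f z).toReal ≤ inner ℝ (moreauGrad l x p) (x - z) := by
  have hsub := hp.moreau_add_inner_add_le hbot hconv hl.ne' hz
  rw [← neg_sub x z, inner_neg_right] at hsub
  have hnonneg : 0 ≤ l / 2 * ‖moreauGrad l x p‖ ^ 2 := by positivity
  linarith

theorem affine_minorant_le (hp : IsProxPt f l x p) (hbot : ∀ u, f u ≠ ⊥)
    (hconv : EConvexOn f) (hl : l ≠ 0) (hl₂ : 0 < l₂) (x₂ u : H) :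
    ((moreau f l x + inner ℝ (moreauGrad l x p) (x₂ - x)
        - (l₂ - l) / 2 * ‖moreauGrad l x p‖ ^ 2 : ℝ) : EReal)
      ≤ f u + ((‖x₂ - u‖ ^ 2 / (2 * l₂) : ℝ) : EReal) := by
  by_cases hu : f u = ⊤
  · rw [hu, EReal.top_add_coe]
    exact le_top
  have hsub := hp.moreau_add_inner_add_le hbot hconv hl hu
  have hyoung := neg_mul_norm_sq_le_inner_add hl₂ (moreauGrad l x p) (u - x₂)
  have hux : u - x = (u - x₂) + (x₂ - x) := by abel
  rw [hux, inner_add_right] at hsub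
  rw [← EReal.coe_toReal hu (hbot u), ← EReal.coe_add, EReal.coe_le_coe_iff, norm_sub_rev x₂ u]
  linarith

/-- Together with `moreau_sub_affine_le`, this squeezes the first-order remainder of the envelope
between `0` and a quadratic. -/
theorem affine_le_moreau (hp : IsProxPt f l x p) (hbot : ∀ u, f u ≠ ⊥) (hconv : EConvexOn f)
    (hl : l ≠ 0) (hpt : f p ≠ ⊤) (hl₂ : 0 < l₂) (x₂ : H) :
    moreau f l x + inner ℝ (moreauGrad l x p) (x₂ - x) - (l₂ - l) / 2 * ‖moreauGrad l x p‖ ^ 2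
      ≤ moreau f l₂ x₂ :=
  le_moreau (hp.affine_minorant_le hbot hconv hl hl₂ x₂) hpt

theorem moreau_sub_affine_le (hp : IsProxPt f l x p) (hbot : ∀ u, f u ≠ ⊥) (hconv : EConvexOn f)
    (hl : l ≠ 0) (hpt : f p ≠ ⊤) (hl₂ : 0 < l₂) (x₂ : H) :
    moreau f l₂ x₂ - (moreau f l x + inner ℝ (moreauGrad l x p) (x₂ - x)
        - (l₂ - l) / 2 * ‖moreauGrad l x p‖ ^ 2)
      ≤ ‖x₂ - x - (l₂ - l) • moreauGrad l x p‖ ^ 2 / (2 * l₂) := by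
  have hle := moreau_le (hp.affine_minorant_le hbot hconv hl hl₂ x₂) hpt
  rw [hp.moreau_eq (hbot p) hpt, norm_sq_sub_div_two_mul hl]
  set g := moreauGrad l x p
  have hx₂ : x₂ - p = (x₂ - x - (l₂ - l) • g) + l₂ • g := by
    rw [sub_smul, smul_moreauGrad hl]
    abel
  have hsq : ‖x₂ - p‖ ^ 2 / (2 * l₂) = ‖x₂ - x - (l₂ - l) • g‖ ^ 2 / (2 * l₂)
      + inner ℝ g (x₂ - x) - (l₂ - l) * ‖g‖ ^ 2 + l₂ / 2 * ‖g‖ ^ 2 := by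
    rw [hx₂, norm_add_sq_real, real_inner_smul_right, norm_smul, Real.norm_eq_abs, mul_pow, sq_abs,
      inner_sub_left, real_inner_smul_left, real_inner_self_eq_norm_sq, real_inner_comm]
    field_simp
    ring
  linarith

theorem hasFDerivAt_moreau (hp : IsProxPt f l x p) (hbot : ∀ u, f u ≠ ⊥) (hconv : EConvexOn f)
    (hl : 0 < l) (hpt : f p ≠ ⊤) :
    HasFDerivAt (fun q : ℝ × H => moreau f q.1 q.2)
      (innerSL ℝ (moreauGrad l x p) ∘L ContinuousLinearMap.snd ℝ ℝ H
        - (‖moreauGrad l x p‖ ^ 2 / 2) • ContinuousLinearMap.fst ℝ ℝ H) (l, x) := by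
  set g := moreauGrad l x p
  refine .of_isLittleO (Asymptotics.IsBigO.trans_isLittleO (.of_bound' ?_)
    (isLittleO_norm_sq_div hl.ne' x g))
  have hpos : ∀ᶠ q : ℝ × H in nhds (l, x), 0 < q.1 :=
    continuous_fst.continuousAt.eventually (lt_mem_nhds hl)
  filter_upwards [hpos] with q hq
  have hlower := hp.affine_le_moreau hbot hconv hl.ne' hpt hq q.2
  have hupper := hp.moreau_sub_affine_le hbot hconv hl.ne' hpt hq q.2
  simp only [sub_apply, ContinuousLinearMap.comp_apply,
    smul_apply, ContinuousLinearMap.coe_fst', ContinuousLinearMap.coe_snd',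
    innerSL_apply_apply, Prod.fst_sub, Prod.snd_sub, smul_eq_mul, Real.norm_eq_abs]
  refine abs_le_abs_of_nonneg ?_ ?_ <;> linarith

theorem hasDerivAt_moreau {lam : ℝ → ℝ} {x : ℝ → H} {t lam' : ℝ} {v : H}
    (hp : IsProxPt f (lam t) (x t) p) (hbot : ∀ u, f u ≠ ⊥) (hconv : EConvexOn f)
    (hpt : f p ≠ ⊤) (hlam : 0 < lam t) (hlam' : HasDerivAt lam lam' t) (hx : HasDerivAt x v t) :
    HasDerivAt (fun s => moreau f (lam s) (x s))
      (inner ℝ (moreauGrad (lam t) (x t) p) v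
        - lam' / 2 * ‖moreauGrad (lam t) (x t) p‖ ^ 2) t := by
  refine ((hp.hasFDerivAt_moreau hbot hconv hlam hpt).comp_hasDerivAt t
    (hlam'.prodMk hx)).congr_deriv ?_
  simp only [sub_apply, ContinuousLinearMap.comp_apply,
    smul_apply, ContinuousLinearMap.coe_fst', ContinuousLinearMap.coe_snd',
    innerSL_apply_apply, smul_eq_mul]
  ring

end IsProxPt

end MoreauEnvelope

section LyapunovEnergy

/-- The weight `w(t) = b(t) - β'(t) - β(t) / t`, by which `t G(t)` enters the derivative of
`anchoredVelocity` and `t²` times the objective gap enters `lyapunovEnergy`; `β'` stands for the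
derivative of `β`. -/
def lyapunovWeight (β β' b : ℝ → ℝ) (t : ℝ) : ℝ := b t - β' t - β t / t

theorem lyapunovWeight_nonneg {β β' b : ℝ → ℝ} {t : ℝ} (h : β' t + β t / t ≤ b t) :
    0 ≤ lyapunovWeight β β' b t := by
  rw [lyapunovWeight]
  linarith

theorem lyapunovWeight_le {β β' b : ℝ → ℝ} {t : ℝ} (ht : 0 ≤ t) (hβ : 0 ≤ β t) (hβ' : 0 ≤ β' t) :
    lyapunovWeight β β' b t ≤ b t := by
  rw [lyapunovWeight, sub_sub]
  exact sub_le_self _ (by positivity)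

variable {H : Type*} [NormedAddCommGroup H] [InnerProductSpace ℝ H]
  {α t : ℝ} {β w F : ℝ → ℝ} {x v G : ℝ → H} {z : H}

/-- The vector `(α - 1) (x - z) + t (ẋ + β G)`, the anchored velocity in the Lyapunov energy of
the inertial dynamics `ẍ + (α / t) ẋ + β Ġ + b G = 0`; here `v` stands for `ẋ`. -/
def anchoredVelocity (α : ℝ) (β : ℝ → ℝ) (x v G : ℝ → H) (z : H) (t : ℝ) : H :=
  (α - 1) • (x t - z) + t • (v t + β t • G t)

/-- The Lyapunov energy `t² w F + ‖(α - 1) (x - z) + t (ẋ + β G)‖² / 2`, where `F` stands for the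
gap of the objective. -/
def lyapunovEnergy (α : ℝ) (β w F : ℝ → ℝ) (x v G : ℝ → H) (z : H) (t : ℝ) : ℝ :=
  t ^ 2 * w t * F t + ‖anchoredVelocity α β x v G z t‖ ^ 2 / 2

theorem hasDerivAt_anchoredVelocity {β' b : ℝ → ℝ} {a G' : H} (ht : t ≠ 0)
    (hx : HasDerivAt x (v t) t) (hv : HasDerivAt v a t) (hβ : HasDerivAt β (β' t) t)
    (hG : HasDerivAt G G' t) (hode : a + (α / t) • v t + β t • G' + b t • G t = 0) :
    HasDerivAt (anchoredVelocity α β x v G z) (-(t * lyapunovWeight β β' b t) • G t) t := by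
  have hderiv := ((hx.sub_const z).const_smul (α - 1)).add
    ((hasDerivAt_id t).smul (hv.add (hβ.smul hG)))
  refine hderiv.congr_deriv ?_
  have ha : a = -((α / t) • v t + β t • G' + b t • G t) := by
    rw [eq_neg_iff_add_eq_zero, ← hode]
    abel
  simp only [ha, lyapunovWeight, id, Pi.add_apply, Pi.smul_apply']
  match_scalars <;> field_simp <;> ring

theorem inner_anchoredVelocity :
    inner ℝ (anchoredVelocity α β x v G z t) (G t)
      = (α - 1) * inner ℝ (G t) (x t - z) + t * (inner ℝ (G t) (v t) + β t * ‖G t‖ ^ 2) := by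
  rw [real_inner_comm, anchoredVelocity]
  simp only [inner_add_right, real_inner_smul_right, real_inner_self_eq_norm_sq]

theorem hasDerivAt_lyapunovEnergy {w' κ : ℝ}
    (hr : HasDerivAt (anchoredVelocity α β x v G z) (-(t * w t) • G t) t)
    (hw : HasDerivAt w w' t) (hF : HasDerivAt F (inner ℝ (G t) (v t) - κ * ‖G t‖ ^ 2) t) :
    HasDerivAt (lyapunovEnergy α β w F x v G z)
      (t * ((2 * w t + t * w') * F t - (α - 1) * w t * inner ℝ (G t) (x t - z))
        - t ^ 2 * w t * (κ + β t) * ‖G t‖ ^ 2) t := by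
  refine (((((hasDerivAt_id t).pow 2).mul hw).mul hF).add
    (hr.norm_sq.div_const 2)).congr_deriv ?_
  rw [real_inner_smul_right, inner_anchoredVelocity]
  simp only [Nat.cast_ofNat, id_eq, Nat.add_one_sub_one, pow_one, mul_one, Pi.pow_apply,
    Pi.mul_apply, neg_mul, mul_neg]
  ring

theorem lyapunovEnergy_nonneg (hw : 0 ≤ w t) (hF : 0 ≤ F t) :
    0 ≤ lyapunovEnergy α β w F x v G z t := by
  unfold lyapunovEnergy
  positivity

end LyapunovEnergy

theorem lyapunovEnergy_deriv_le {α ε t w w' F g κ n : ℝ} (ht : 0 ≤ t) (hw : 0 ≤ w) (hF : 0 ≤ F)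
    (hFg : F ≤ g) (hκ : 0 ≤ κ) (hεα : ε ≤ α - 1) (hgrowth : ε * w ≤ (α - 3) * w - t * w') :
    t * ((2 * w + t * w') * F - (α - 1) * w * g) - t ^ 2 * w * κ * n ^ 2
      ≤ -(ε * (t * w * g)) := by
  have hgap : (2 * w + t * w') * F ≤ (α - 1 - ε) * w * g :=
    calc (2 * w + t * w') * F ≤ (α - 1 - ε) * w * F := by gcongr; linarith
      _ ≤ (α - 1 - ε) * w * g := by
        have : 0 ≤ α - 1 - ε := by linarith
        gcongr
  have hcoercive : 0 ≤ t ^ 2 * w * κ * n ^ 2 := by positivity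
  linarith [mul_le_mul_of_nonneg_left hgap ht]

theorem nonneg_of_hasDerivAt_of_monotoneOn_Ici {g : ℝ → ℝ} {a t g' : ℝ}
    (hg : MonotoneOn g (Ici a)) (ht : a ≤ t) (hg' : HasDerivAt g g' t) : 0 ≤ g' := by
  rw [← hg'.hasDerivWithinAt.derivWithin (uniqueDiffOn_Ici a t ht)]
  exact hg.derivWithin_nonneg

theorem integrableOn_Ici_of_le_dissipation {E E' φ : ℝ → ℝ} {a : ℝ}
    (hE : ∀ t ≥ a, HasDerivAt E (E' t) t) (hE_nonneg : ∀ t ≥ a, 0 ≤ E t)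
    (hφ : LocallyIntegrableOn φ (Ici a)) (hφ_nonneg : ∀ t ≥ a, 0 ≤ φ t)
    (hle : ∀ t ≥ a, E' t ≤ -φ t) : IntegrableOn φ (Ici a) := by
  have hint : ∀ T, IntegrableOn φ (Icc a T) := fun T =>
    hφ.integrableOn_compact_subset Icc_subset_Ici_self isCompact_Icc
  have hbound : ∀ T ≥ a, ∫ t in a..T, ‖φ t‖ ≤ E a := by
    intro T hT
    have hnorm : ∫ t in a..T, ‖φ t‖ = ∫ t in a..T, φ t := by
      refine intervalIntegral.integral_congr fun t ht => ?_
      rw [uIcc_of_le hT] at ht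
      exact Real.norm_of_nonneg (hφ_nonneg t ht.1)
    have hdrop : ∫ t in a..T, φ t ≤ -E T - -E a :=
      intervalIntegral.integral_le_sub_of_hasDeriv_right_of_le hT
        (fun t ht => (hE t ht.1).neg.continuousAt.continuousWithinAt)
        (fun t ht => (hE t ht.1.le).neg.hasDerivWithinAt) (hint T)
        (fun t ht => le_neg_of_le_neg (hle t ht.1.le))
    linarith [hE_nonneg T hT]
  rw [integrableOn_Ici_iff_integrableOn_Ioi]
  exact integrableOn_Ioi_of_intervalIntegral_norm_bounded (E a) a
    (fun T => (hint T).mono_set Ioc_subset_Icc_self) tendsto_id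
    ((eventually_ge_atTop a).mono hbound)

theorem integrableOn_Ici_weight_mul_inner {H : Type*} [NormedAddCommGroup H]
    [InnerProductSpace ℝ H] {t₀ α ε : ℝ} {β β' b w' F κ : ℝ → ℝ} {x v acc G G' : ℝ → H} {z : H}
    (ht₀ : 0 < t₀) (hε : 0 < ε) (hεα : ε ≤ α - 1)
    (hβ' : ∀ t ≥ t₀, HasDerivAt β (β' t) t)
    (hw' : ∀ t ≥ t₀, HasDerivAt (lyapunovWeight β β' b) (w' t) t)
    (hx : ∀ t ≥ t₀, HasDerivAt x (v t) t) (hv : ∀ t ≥ t₀, HasDerivAt v (acc t) t)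
    (hG' : ∀ t ≥ t₀, HasDerivAt G (G' t) t)
    (hode : ∀ t ≥ t₀, acc t + (α / t) • v t + β t • G' t + b t • G t = 0)
    (hF' : ∀ t ≥ t₀, HasDerivAt F (inner ℝ (G t) (v t) - κ t * ‖G t‖ ^ 2) t)
    (hF : ∀ t ≥ t₀, 0 ≤ F t) (hFG : ∀ t ≥ t₀, F t ≤ inner ℝ (G t) (x t - z))
    (hκ : ∀ t ≥ t₀, 0 ≤ κ t + β t) (hw : ∀ t ≥ t₀, 0 ≤ lyapunovWeight β β' b t)
    (hgrowth : ∀ t ≥ t₀, ε * lyapunovWeight β β' b t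
      ≤ (α - 3) * lyapunovWeight β β' b t - t * w' t) :
    IntegrableOn (fun t => t * lyapunovWeight β β' b t * inner ℝ (G t) (x t - z)) (Ici t₀) := by
  have hpos : ∀ t ≥ t₀, 0 ≤ t := fun t ht => ht₀.le.trans ht
  have hcont : ContinuousOn (fun t => t * lyapunovWeight β β' b t * inner ℝ (G t) (x t - z))
      (Ici t₀) := fun t ht =>
    ((continuousAt_id.mul (hw' t ht).continuousAt).mul ((hG' t ht).continuousAt.inner
      ((hx t ht).continuousAt.sub continuousAt_const))).continuousWithinAt
  have hdissipation : IntegrableOn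
      (fun t => ε * (t * lyapunovWeight β β' b t * inner ℝ (G t) (x t - z))) (Ici t₀) :=
    integrableOn_Ici_of_le_dissipation
      (fun t ht => hasDerivAt_lyapunovEnergy (hasDerivAt_anchoredVelocity (ht₀.trans_le ht).ne'
        (hx t ht) (hv t ht) (hβ' t ht) (hG' t ht) (hode t ht)) (hw' t ht) (hF' t ht))
      (fun t ht => lyapunovEnergy_nonneg (hw t ht) (hF t ht))
      ((continuousOn_const.mul hcont).locallyIntegrableOn measurableSet_Ici)
      (fun t ht => mul_nonneg hε.le (mul_nonneg (mul_nonneg (hpos t ht) (hw t ht))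
        ((hF t ht).trans (hFG t ht))))
      (fun t ht => lyapunovEnergy_deriv_le (hpos t ht) (hw t ht) (hF t ht) (hFG t ht) (hκ t ht) hεα
        (hgrowth t ht))
  exact (integrable_const_mul_iff hε.ne'.isUnit _).1 hdissipation

theorem gradient_inner_integral_finite_general
    {H : Type*} [NormedAddCommGroup H] [InnerProductSpace ℝ H]
    {Φ : H → EReal} (hΦbot : ∀ y, Φ y ≠ ⊥) (hΦproper : ∃ y, Φ y ≠ ⊤) (hΦconv : EConvexOn Φ)
    {t₀ α ε : ℝ} (ht₀ : 0 < t₀) {β b lam β' lam' w' : ℝ → ℝ}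
    (hlampos : ∀ t ≥ t₀, 0 < lam t)
    (hβ' : ∀ t ≥ t₀, HasDerivAt β (β' t) t)
    (hlam' : ∀ t ≥ t₀, HasDerivAt lam (lam' t) t)
    (hw' : ∀ t ≥ t₀, HasDerivAt (lyapunovWeight β β' b) (w' t) t)
    {x v acc p G' : ℝ → H}
    (hx : ∀ t ≥ t₀, HasDerivAt x (v t) t)
    (hv : ∀ t ≥ t₀, HasDerivAt v (acc t) t)
    (hp : ∀ t ≥ t₀, IsProxPt Φ (lam t) (x t) (p t))
    (hG' : ∀ t ≥ t₀, HasDerivAt (fun s => moreauGrad (lam s) (x s) (p s)) (G' t) t)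
    (hode : ∀ t ≥ t₀, acc t + (α / t) • v t + β t • G' t
        + b t • moreauGrad (lam t) (x t) (p t) = 0)
    (hlamβ : ∀ t ≥ t₀, 0 ≤ lam' t / 2 + β t)
    (hw : ∀ t ≥ t₀, 0 ≤ lyapunovWeight β β' b t)
    (hε : 0 < ε) (hεα : ε ≤ α - 1)
    (hgrowth : ∀ t ≥ t₀, ε * lyapunovWeight β β' b t
      ≤ (α - 3) * lyapunovWeight β β' b t - t * w' t)
    {z : H} (hz : ∀ y, Φ z ≤ Φ y) :
    IntegrableOn (fun t => t * lyapunovWeight β β' b t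
      * inner ℝ (moreauGrad (lam t) (x t) (p t)) (x t - z)) (Ici t₀) := by
  have hzt : Φ z ≠ ⊤ := by
    obtain ⟨y, hy⟩ := hΦproper
    exact ((hz y).trans_lt hy.lt_top).ne
  exact integrableOn_Ici_weight_mul_inner (F := fun t => moreau Φ (lam t) (x t) - (Φ z).toReal)
    ht₀ hε hεα hβ' hw' hx hv hG' hode
    (fun t ht => ((hp t ht).hasDerivAt_moreau hΦbot hΦconv ((hp t ht).ne_top hΦproper)
      (hlampos t ht) (hlam' t ht) (hx t ht)).sub_const _)
    (fun t ht => sub_nonneg.2 <|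
      (hp t ht).toReal_le_moreau (hlampos t ht).le hΦbot hΦproper hz)
    (fun t ht => (hp t ht).moreau_sub_le_inner hΦbot hΦconv (hlampos t ht) hzt)
    hlamβ hw hgrowth

theorem gradient_inner_integral_finite
    {H : Type*} [NormedAddCommGroup H] [InnerProductSpace ℝ H] [CompleteSpace H]
    (Φ : H → EReal)
    (hΦbot : ∀ y, Φ y ≠ ⊥) (hΦproper : ∃ y, Φ y ≠ ⊤)
    (hΦconv : EConvexOn Φ) (hΦlsc : LowerSemicontinuous Φ)
    (t₀ α : ℝ) (ht₀ : 0 < t₀)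
    (β b lam β' b' lam' w' : ℝ → ℝ)
    (hβnonneg : ∀ t ≥ t₀, 0 ≤ β t)
    (hbpos : ∀ t ≥ t₀, 0 < b t)
    (hlampos : ∀ t ≥ t₀, 0 < lam t)
    (hβ' : ∀ t ≥ t₀, HasDerivAt β (β' t) t)
    (hb' : ∀ t ≥ t₀, HasDerivAt b (b' t) t)
    (hlam' : ∀ t ≥ t₀, HasDerivAt lam (lam' t) t)
    (hw' : ∀ t ≥ t₀, HasDerivAt (fun s => b s - β' s - β s / s) (w' t) t)
    (x v acc p G' : ℝ → H)
    (hx : ∀ t ≥ t₀, HasDerivAt x (v t) t)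
    (hv : ∀ t ≥ t₀, HasDerivAt v (acc t) t)
    (hp : ∀ t ≥ t₀, IsProxPt Φ (lam t) (x t) (p t))
    (hG' : ∀ t ≥ t₀, HasDerivAt (fun s => (lam s)⁻¹ • (x s - p s)) (G' t) t)
    (hode : ∀ t ≥ t₀, acc t + (α / t) • v t + β t • G' t
        + b t • ((lam t)⁻¹ • (x t - p t)) = 0)
    (hα : 1 < α)
    (hlammono : MonotoneOn lam (Set.Ici t₀))
    (hβmono : MonotoneOn β (Set.Ici t₀))
    (hw : ∀ t ≥ t₀, β' t + β t / t < b t)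
    (hAs2 : ∃ ε, 0 < ε ∧ ε < α - 1 ∧
      ∀ t ≥ t₀, ε * b t ≤ (α - 3) * (b t - β' t - β t / t) - t * w' t)
    (z : H) (hz : ∀ y, Φ z ≤ Φ y)
    :
    ∫⁻ t in Set.Ici t₀, ENNReal.ofReal
      (t * (b t - β' t - β t / t)
        * (inner ℝ ((lam t)⁻¹ • (x t - p t)) (x t - z) : ℝ)) < ⊤ := by
  obtain ⟨ε, hε, hεα, hgrowth⟩ := hAs2
  exact (gradient_inner_integral_finite_general hΦbot hΦproper hΦconv ht₀ hlampos hβ' hlam' hw'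
    hx hv hp hG' hode
    (fun t ht => add_nonneg (div_nonneg (nonneg_of_hasDerivAt_of_monotoneOn_Ici hlammono ht
      (hlam' t ht)) zero_le_two) (hβnonneg t ht))
    (fun t ht => lyapunovWeight_nonneg (hw t ht).le) hε hεα.le
    (fun t ht => (mul_le_mul_of_nonneg_left (lyapunovWeight_le (ht₀.le.trans ht) (hβnonneg t ht)
      (nonneg_of_hasDerivAt_of_monotoneOn_Ici hβmono ht (hβ' t ht))) hε.le).trans (hgrowth t ht))
    hz).lintegral_lt_top
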